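/- Let R ⊆ S be an integral FCP ring extension and let T ∈ [R,S] be the t-closure of R in S (i.e., R ⊆ T is infra-integral and T ⊆ S is t-closed). Then R ⊆ S is catenarian if and only if T ⊆ S is catenarian and R ⊆ S is 2-catenarian, i.e., whenever A, B, C ∈ [R,S] with B covering A and C covering B, every maximal chain of [R,S] from A to C has length 2. -/

import Mathlib

/-!
If all maximal chains from `R` to `S` have the same length, so do those of every subinterval, by
completing with chains below and above; this gives one implication.

For the converse, call a minimal step `A ⊂ B` (a covering) t-closed if `A` is t-closed in `B`; a
minimal step which is not t-closed is infra-integral, and none is both (`infra_of_not_TCl`,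
`Infra.not_TCl`). If a t-closed step `A ⊂ B` is followed by an infra-integral one `B ⊂ C`, then
`A` is not t-closed in `C` (`TCl.top_of_covBy`), so there is an infra-integral `A ⊂ D` with
`D ⊆ C`, and `D ≠ C` since `A ⊂ B` is not infra-integral. Being 2-catenarian forces `A ⊂ D ⊂ C`
to be minimal steps, now with the infra-integral one first (`exchange`). Repeating the exchange,
every maximal chain from `R` to `S` is replaced by one of the same length that consists of an
infra-integral part from `R` to some `U` and a t-closed part from `U` to `S` (`exists_split`); by
uniqueness of the t-closure, `U = T`.

The second part has a length independent of the chain because `T ⊆ S` is catenarian. So has the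
first: in an infra-integral extension of `R` each minimal step has an `R`-module quotient that is
simple (`Infra.covBy_toSubmodule`), so the Jordan–Hölder theorem for `R`-modules applies.

The analysis of minimal steps rests on the conductor `(A : B)` being a maximal ideal of `A`
(`exists_inv_mod_cond`). Infra-integrality is tested at the maximal ideals of the fixed integral
extension `S`, which makes transitivity and monotonicity immediate.
-/

/-- A maximal chain of length `n` from `T` to `U`: each step is a covering. -/
def IsMaxChainFromTo {α : Type*} [PartialOrder α] (T U : α) (n : ℕ)
    (c : Fin (n + 1) → α) : Prop :=
  c 0 = T ∧ c (Fin.last n) = U ∧ ∀ i : Fin n, c i.castSucc ⋖ c i.succ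

/-- The subextension determined by `T ≤ U` is catenarian: all maximal chains from
`T` to `U` have the same length. -/
def IsCatenarianFromTo {α : Type*} [PartialOrder α] (T U : α) : Prop :=
  ∀ (n m : ℕ) (c : Fin (n + 1) → α) (d : Fin (m + 1) → α),
    IsMaxChainFromTo T U n c → IsMaxChainFromTo T U m d → n = m

/-- The extension `R ⊆ S` has FCP: every chain of `R`-subalgebras of `S` is finite. -/
def IsFCPExt (R S : Type*) [CommRing R] [CommRing S] [Algebra R S] : Prop :=
  ∀ C : Set (Subalgebra R S), IsChain (· ≤ ·) C → C.Finite

/-- The extension `R ⊆ S` is catenarian. -/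
def IsCatenarianExt (R S : Type*) [CommRing R] [CommRing S] [Algebra R S] : Prop :=
  IsCatenarianFromTo (⊥ : Subalgebra R S) ⊤

/-- The length `ℓ[T,U]`: the supremum of lengths of chains from `T` to `U`. -/
noncomputable def extLength {α : Type*} [PartialOrder α] (T U : α) : ℕ :=
  sSup {n | ∃ c : Fin (n + 1) → α, StrictMono c ∧ c 0 = T ∧ c (Fin.last n) = U}

/-- The residual extension `κ_R(P) → κ_S(Q)` (for `P = Q ∩ R`) is an isomorphism. -/
def ResidualExtIsIso {R S : Type*} [CommRing R] [CommRing S] (f : R →+* S)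
    (Q : Ideal S) [Q.IsPrime] : Prop :=
  Function.Bijective
    (IsLocalRing.ResidueField.map
      (Localization.localRingHom (Q.comap f) Q f rfl))

/-- `R ⊆ S` is infra-integral: it is integral and all residual extensions
are isomorphisms. -/
def IsInfraIntegral (R S : Type*) [CommRing R] [CommRing S] [Algebra R S] : Prop :=
  Algebra.IsIntegral R S ∧
    ∀ (Q : Ideal S) (_ : Q.IsPrime), ResidualExtIsIso (algebraMap R S) Q

/-- The subextension `T ⊆ S` is t-closed. -/
def IsTClosedIn {R S : Type*} [CommRing R] [CommRing S] [Algebra R S]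
    (T : Subalgebra R S) : Prop :=
  ∀ (b : S), ∀ r ∈ T, b ^ 2 - r * b ∈ T → b ^ 3 - r * b ^ 2 ∈ T → b ∈ T

/-- `T` is the t-closure of `R` in `S`: `R ⊆ T` is infra-integral and `T ⊆ S`
is t-closed. -/
def IsTClosure {R S : Type*} [CommRing R] [CommRing S] [Algebra R S]
    (T : Subalgebra R S) : Prop :=
  IsInfraIntegral R T ∧ IsTClosedIn T

/-- The extension `R ⊆ S` is 2-catenarian: every 2-minimal subextension has length 2. -/
def IsTwoCatenarian (R S : Type*) [CommRing R] [CommRing S] [Algebra R S] : Prop :=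
  ∀ A B C : Subalgebra R S, A ⋖ B → B ⋖ C →
    ∀ (n : ℕ) (c : Fin (n + 1) → Subalgebra R S),
      IsMaxChainFromTo A C n c → n = 2

/-! ### Maximal chains in a partial order -/

/-- `MC n a b`: there is a maximal chain of length `n` from `a` to `b`. -/
inductive MC {α : Type*} [PartialOrder α] : ℕ → α → α → Prop
  | nil (a : α) : MC 0 a a
  | cons {n : ℕ} {a b c : α} : a ⋖ b → MC n b c → MC (n + 1) a c

theorem MC.append {α : Type*} [PartialOrder α] {n m : ℕ} {a b c : α}
    (h : MC n a b) (h' : MC m b c) : MC (n + m) a c := by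
  induction h with
  | nil a => simpa using h'
  | cons hab _ ih =>
    rw [Nat.add_right_comm]
    exact MC.cons hab (ih h')

theorem MC.le {α : Type*} [PartialOrder α] {n : ℕ} {a b : α} (h : MC n a b) : a ≤ b := by
  induction h with
  | nil a => exact le_rfl
  | cons hab _ ih => exact hab.le.trans ih

theorem MC.of_isMaxChain {α : Type*} [PartialOrder α] {n : ℕ} {a b : α}
    {c : Fin (n + 1) → α} (h : IsMaxChainFromTo a b n c) : MC n a b := by
  induction n generalizing a with
  | zero =>
    obtain ⟨h0, h1, -⟩ := h
    have : a = b := h0.symm.trans h1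
    exact this ▸ MC.nil a
  | succ n ih =>
    obtain ⟨h0, h1, h2⟩ := h
    have h01 : a ⋖ c 1 := by
      have := h2 0
      rw [Fin.castSucc_zero, h0] at this
      exact this
    refine MC.cons h01 (ih (c := fun i => c i.succ) ⟨rfl, ?_, fun i => ?_⟩)
    · simpa using h1
    · simpa using h2 i.succ

theorem MC.exists_isMaxChain {α : Type*} [PartialOrder α] {n : ℕ} {a b : α}
    (h : MC n a b) : ∃ c : Fin (n + 1) → α, IsMaxChainFromTo a b n c := by
  induction h with
  | nil a => exact ⟨fun _ => a, rfl, rfl, fun i => i.elim0⟩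
  | @cons n a b c hab _ ih =>
    obtain ⟨d, h0, h1, h2⟩ := ih
    refine ⟨Fin.cons a d, rfl, ?_, fun i => ?_⟩
    · rw [← Fin.succ_last, Fin.cons_succ, h1]
    · induction i using Fin.cases with
      | zero => simpa [h0] using hab
      | succ i => simpa [← Fin.succ_castSucc] using h2 i

theorem exists_MC {α : Type*} [PartialOrder α] [WellFoundedLT α] [WellFoundedGT α]
    {a b : α} (hab : a ≤ b) : ∃ n, MC n a b := by
  induction a using WellFoundedGT.induction with
  | ind a ih =>
    rcases hab.eq_or_lt with rfl | hlt
    · exact ⟨0, MC.nil _⟩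
    · obtain ⟨c, hac, hcb⟩ := exists_covBy_le_of_lt hlt
      obtain ⟨n, hn⟩ := ih c hac.lt hcb
      exact ⟨n + 1, MC.cons hac hn⟩

theorem isCatenarianFromTo_iff {α : Type*} [PartialOrder α] {a b : α} :
    IsCatenarianFromTo a b ↔ ∀ n m, MC n a b → MC m a b → n = m := by
  constructor
  · intro h n m hn hm
    obtain ⟨c, hc⟩ := hn.exists_isMaxChain
    obtain ⟨d, hd⟩ := hm.exists_isMaxChain
    exact h n m c d hc hd
  · intro h n m c d hc hd
    exact h n m (MC.of_isMaxChain hc) (MC.of_isMaxChain hd)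

/-- Jordan–Hölder: maximal chains of submodules between two given ones have equal length. -/
theorem MC.length_unique_submodule {R M : Type*} [Ring R] [AddCommGroup M] [Module R M]
    {n m : ℕ} {a b : Submodule R M} (hn : MC n a b) (hm : MC m a b) : n = m := by
  obtain ⟨c, c0, c1, c2⟩ := hn.exists_isMaxChain
  obtain ⟨d, d0, d1, d2⟩ := hm.exists_isMaxChain
  let s : CompositionSeries (Submodule R M) := ⟨n, c, c2⟩
  let t : CompositionSeries (Submodule R M) := ⟨m, d, d2⟩
  exact (CompositionSeries.jordan_holder s t (c0.trans d0.symm) (c1.trans d1.symm)).length_eq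

theorem IsFCPExt.wellFoundedLT {R S : Type*} [CommRing R] [CommRing S] [Algebra R S]
    (h : IsFCPExt R S) : WellFoundedLT (Subalgebra R S) := by
  refine ⟨?_⟩
  rw [RelEmbedding.wellFounded_iff_isEmpty]
  refine ⟨fun f => ?_⟩
  have hf : StrictAnti f := fun i j hij => f.map_rel_iff.2 hij
  refine Set.infinite_range_of_injective f.injective (h (Set.range f) ?_)
  rintro _ ⟨i, rfl⟩ _ ⟨j, rfl⟩ -
  exact (le_total i j).symm.imp (fun h => hf.antitone h) (fun h => hf.antitone h)

theorem IsFCPExt.wellFoundedGT {R S : Type*} [CommRing R] [CommRing S] [Algebra R S]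
    (h : IsFCPExt R S) : WellFoundedGT (Subalgebra R S) := by
  refine ⟨?_⟩
  rw [RelEmbedding.wellFounded_iff_isEmpty]
  refine ⟨fun f => ?_⟩
  have hf : StrictMono f := fun i j hij => f.map_rel_iff.2 hij
  refine Set.infinite_range_of_injective f.injective (h (Set.range f) ?_)
  rintro _ ⟨i, rfl⟩ _ ⟨j, rfl⟩ -
  exact (le_total i j).imp (fun h => hf.monotone h) (fun h => hf.monotone h)

section Ext

variable {R S : Type*} [CommRing R] [CommRing S] [Algebra R S] {A B C : Subalgebra R S}

/-! ### The conductor of a minimal extension -/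

/-- The conductor `(A : B)`, as a subset of `S`. It is contained in `A`, since `1 ∈ B`. -/
def condSet (A B : Subalgebra R S) : Set S := {x | ∀ b ∈ B, x * b ∈ A}

theorem cond_sub {x : S} (hx : x ∈ condSet A B) : x ∈ A := by
  simpa using hx 1 B.one_mem

theorem cond_mul {x b : S} (hx : x ∈ condSet A B) (hb : b ∈ B) : x * b ∈ condSet A B := by
  intro c hc
  rw [mul_assoc]
  exact hx _ (B.mul_mem hb hc)

theorem cond_add {x y : S} (hx : x ∈ condSet A B) (hy : y ∈ condSet A B) : x + y ∈ condSet A B := by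
  intro c hc
  rw [add_mul]
  exact A.add_mem (hx _ hc) (hy _ hc)

theorem cond_neg {x : S} (hx : x ∈ condSet A B) : -x ∈ condSet A B := by
  intro c hc
  rw [neg_mul]
  exact A.neg_mem (hx _ hc)

theorem one_notMem_cond (h : A ⋖ B) : (1 : S) ∉ condSet A B := fun h1 =>
  h.lt.not_ge fun b hb => by simpa using h1 b hb

/-- The subalgebra `A + xB`, where `x ∈ B`. -/
def plusMul (A B : Subalgebra R S) (hAB : A ≤ B) (x : S) (hx : x ∈ B) : Subalgebra R S where
  carrier := {s | ∃ a ∈ A, ∃ b ∈ B, s = a + x * b}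
  mul_mem' := by
    rintro _ _ ⟨a, ha, b, hb, rfl⟩ ⟨a', ha', b', hb', rfl⟩
    refine ⟨a * a', A.mul_mem ha ha', a * b' + a' * b + x * b * b', ?_, by ring⟩
    exact B.add_mem (B.add_mem (B.mul_mem (hAB ha) hb') (B.mul_mem (hAB ha') hb))
      (B.mul_mem (B.mul_mem hx hb) hb')
  add_mem' := by
    rintro _ _ ⟨a, ha, b, hb, rfl⟩ ⟨a', ha', b', hb', rfl⟩
    exact ⟨a + a', A.add_mem ha ha', b + b', B.add_mem hb hb', by ring⟩
  algebraMap_mem' r := ⟨_, A.algebraMap_mem r, 0, B.zero_mem, by simp⟩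

theorem cond_or_eq_add (h : A ⋖ B) {x : S} (hx : x ∈ B) :
    x ∈ condSet A B ∨ ∀ y ∈ B, ∃ a ∈ A, ∃ b ∈ B, y = a + x * b := by
  have h1 : A ≤ plusMul A B h.le x hx := fun a ha => ⟨a, ha, 0, B.zero_mem, by simp⟩
  have h2 : plusMul A B h.le x hx ≤ B := by
    rintro _ ⟨a, ha, b, hb, rfl⟩
    exact B.add_mem (h.le ha) (B.mul_mem hx hb)
  rcases h.eq_or_eq h1 h2 with e | e
  · left
    intro b hb
    rw [← e]
    exact ⟨0, A.zero_mem, b, hb, by simp⟩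
  · right
    intro y hy
    rw [← e] at hy
    exact hy

/-- The subalgebra `A[x]`, again viewed over `R`. -/
def adj (A : Subalgebra R S) (x : S) : Subalgebra R S :=
  (Algebra.adjoin A {x}).restrictScalars R

theorem le_adj (A : Subalgebra R S) (x : S) : A ≤ adj A x := fun a ha =>
  (Algebra.adjoin A {x}).algebraMap_mem ⟨a, ha⟩

theorem self_mem_adj (A : Subalgebra R S) (x : S) : x ∈ adj A x :=
  Algebra.self_mem_adjoin_singleton A x

theorem adj_induction {x : S} {p : S → Prop} (hx : p x) (hA : ∀ a ∈ A, p a)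
    (hadd : ∀ y z, p y → p z → p (y + z)) (hmul : ∀ y z, p y → p z → p (y * z))
    {y : S} (hy : y ∈ adj A x) : p y := by
  have hy' : y ∈ Algebra.adjoin A {x} := hy
  clear hy
  induction hy' using Algebra.adjoin_induction with
  | mem z hz =>
    rw [Set.mem_singleton_iff.1 hz]
    exact hx
  | algebraMap a => exact hA a a.2
  | add y z _ _ h h' => exact hadd y z h h'
  | mul y z _ _ h h' => exact hmul y z h h'

theorem adj_le (hAB : A ≤ B) {x : S} (hx : x ∈ B) : adj A x ≤ B := fun _ hy =>
  adj_induction (p := (· ∈ B)) hx (fun _ ha => hAB ha) (fun _ _ => B.add_mem)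
    (fun _ _ => B.mul_mem) hy

/-- A minimal extension is generated by any element outside the base ring. -/
theorem eq_adjoin_of_covBy (h : A ⋖ B) {x : S} (hx : x ∈ B) (hxA : x ∉ A) :
    adj A x = B :=
  (h.eq_or_eq (le_adj A x) (adj_le h.le hx)).resolve_left fun e =>
    hxA (e ▸ self_mem_adj A x)

/-- The conductor of a minimal integral extension `A ⊂ B` is a maximal ideal of `A`: for
`a ∈ A` outside it, `B = A + aB`, and Nakayama's lemma for the finite `A`-module `B / A`
inverts `a` modulo the conductor. -/
theorem exists_inv_mod_cond [Algebra.IsIntegral R S] (h : A ⋖ B) {a : S} (ha : a ∈ A)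
    (hac : a ∉ condSet A B) : ∃ a' ∈ A, a * a' - 1 ∈ condSet A B := by
  have hB := (cond_or_eq_add h (h.le ha)).resolve_left hac
  obtain ⟨x, hx, hxA⟩ := Set.exists_of_ssubset (SetLike.coe_ssubset_coe.2 h.lt)
  have hadj := eq_adjoin_of_covBy h hx hxA
  have hint : IsIntegral A x := (Algebra.IsIntegral.isIntegral (R := R) x).tower_top
  let N : Submodule A S := Subalgebra.toSubmodule (Algebra.adjoin A {x})
  have hN : ∀ y, y ∈ N ↔ y ∈ B := fun y => by
    rw [← hadj]
    rfl
  let q := (Subalgebra.toSubmodule (⊥ : Subalgebra A S)).mkQ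
  have hq : ∀ y, q y = 0 ↔ y ∈ A := fun y => by
    simp [q, Algebra.mem_bot]
  have hle : N.map q ≤ Ideal.span {(⟨a, ha⟩ : A)} • N.map q := by
    rintro _ ⟨y, hy, rfl⟩
    obtain ⟨a0, ha0, b, hb, rfl⟩ := hB y ((hN y).1 hy)
    have e : q (a0 + a * b) = (⟨a, ha⟩ : A) • q b := by
      rw [map_add, (hq a0).2 ha0, zero_add, ← map_smul]
      rfl
    rw [e]
    exact Submodule.smul_mem_smul (Ideal.mem_span_singleton_self _)
      (Submodule.mem_map_of_mem ((hN b).2 hb))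
  obtain ⟨r, hr, hr0⟩ := Submodule.exists_sub_one_mem_and_smul_eq_zero_of_fg_of_le_smul _ _
    (hint.fg_adjoin_singleton.map q) hle
  obtain ⟨c, hc⟩ := Ideal.mem_span_singleton'.1 hr
  have hrc : (r : S) ∈ condSet A B := fun b hb => by
    have := hr0 (q b) (Submodule.mem_map_of_mem ((hN b).2 hb))
    rw [← map_smul, hq] at this
    exact this
  have hc' : (c : S) * a = r - 1 := congrArg Subtype.val hc
  refine ⟨-c, A.neg_mem c.2, ?_⟩
  have : a * -(c : S) - 1 = -r := by linear_combination -hc'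
  rw [this]
  exact cond_neg hrc

/-- By maximality of the conductor in `A`, a proper ideal containing it meets `A` only in it. -/
theorem mem_cond_of_mem [Algebra.IsIntegral R S] (h : A ⋖ B) {Q : Ideal S} (hQ : Q ≠ ⊤)
    (hc : condSet A B ⊆ Q) {a : S} (ha : a ∈ A) (haQ : a ∈ Q) : a ∈ condSet A B := by
  by_contra hn
  obtain ⟨a', -, h1⟩ := exists_inv_mod_cond h ha hn
  refine hQ ((Ideal.eq_top_iff_one Q).2 ?_)
  have := Q.sub_mem (Q.mul_mem_right a' haQ) (hc h1)
  simpa using this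

theorem exists_maximal_over_cond [Algebra.IsIntegral R S] (h : A ⋖ B) :
    ∃ Q : Ideal S, Q.IsMaximal ∧ condSet A B ⊆ Q := by
  let I : Ideal A :=
    { carrier := {a | (a : S) ∈ condSet A B}
      add_mem' := fun hx hy => cond_add hx hy
      zero_mem' := fun b _ => by simp
      smul_mem' := fun c x hx => by
        have := cond_mul hx (h.le c.2)
        rw [mul_comm] at this
        exact this }
  have hI : I ≠ ⊤ := fun e => one_notMem_cond h ((Ideal.eq_top_iff_one I).1 e)
  obtain ⟨M, hM, hIM⟩ := Ideal.exists_le_maximal I hI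
  have : Algebra.IsIntegral A S := Algebra.IsIntegral.tower_top R
  obtain ⟨Q, hQ, hQM⟩ := Ideal.exists_ideal_over_maximal_of_isIntegral (S := S) M (by
    intro x hx
    have : (x : S) = 0 := hx
    have : x = 0 := Subtype.ext this
    simp [this])
  refine ⟨Q, hQ, fun x hx => ?_⟩
  have hxM : (⟨x, cond_sub hx⟩ : A) ∈ M := hIM hx
  rw [← hQM] at hxM
  exact hxM

/-! ### Infra-integral and t-closed subextensions -/

/-- `A ⊆ B` is infra-integral inside the integral extension `S`: at each maximal ideal of `S`
the images of `A` and `B` in the residue field agree. -/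
def Infra (A B : Subalgebra R S) : Prop :=
  ∀ Q : Ideal S, Q.IsMaximal → ∀ b ∈ B, ∃ a ∈ A, b - a ∈ Q

/-- `A` is t-closed in `B`. -/
def TCl (A B : Subalgebra R S) : Prop :=
  ∀ b ∈ B, ∀ r ∈ A, b ^ 2 - r * b ∈ A → b ^ 3 - r * b ^ 2 ∈ A → b ∈ A

theorem Infra.refl (A : Subalgebra R S) : Infra A A := fun Q _ b hb => ⟨b, hb, by simp⟩

theorem Infra.mono {A' B' : Subalgebra R S} (h : Infra A B) (hA : A ≤ A') (hB : B' ≤ B) :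
    Infra A' B' := fun Q hQ b hb =>
  let ⟨a, ha, h⟩ := h Q hQ b (hB hb)
  ⟨a, hA ha, h⟩

theorem Infra.trans (h : Infra A B) (h' : Infra B C) : Infra A C := fun Q hQ c hc => by
  obtain ⟨b, hb, h1⟩ := h' Q hQ c hc
  obtain ⟨a, ha, h2⟩ := h Q hQ b hb
  exact ⟨a, ha, by simpa using Q.add_mem h1 h2⟩

theorem TCl.trans (h : TCl A B) (hAB : A ≤ B) (h' : TCl B C) : TCl A C :=
  fun b hb r hr h1 h2 =>
    h b (h' b hb r (hAB hr) (hAB h1) (hAB h2)) r hr h1 h2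

/-- In a t-closed minimal extension `B / (A : B)` is a field: an element `x` of `B` whose
multiples lying in `A` are all in the conductor lies in the conductor itself. Otherwise
`B = A + x²B`, so that some multiple of `x` is idempotent modulo the conductor. -/
theorem TCl.mem_cond (h : A ⋖ B) (ht : TCl A B) {x : S} (hx : x ∈ B)
    (hA : ∀ b ∈ B, x * b ∈ A → x * b ∈ condSet A B) : x ∈ condSet A B := by
  have hxA : x ∈ A → x ∈ condSet A B := fun h => by
    simpa using hA 1 B.one_mem (by simpa using h)
  rcases cond_or_eq_add h (B.pow_mem hx 2) with h2 | h2
  · refine hxA (ht x hx 0 A.zero_mem ?_ ?_)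
    · simpa using cond_sub h2
    · have := h2 x hx
      rw [zero_mul, sub_zero, pow_succ]
      exact this
  · obtain ⟨a, ha, b, hb, hxe⟩ := h2 x hx
    have hac : a ∈ condSet A B := by
      have e : x * (1 - x * b) = a := by linear_combination hxe
      rw [← e]
      refine hA _ (B.sub_mem B.one_mem (B.mul_mem hx hb)) ?_
      rwa [e]
    have he : x * b ∈ A := by
      refine ht (x * b) (B.mul_mem hx hb) 1 A.one_mem ?_ ?_
      · have e : (x * b) ^ 2 - 1 * (x * b) = a * (-b) := by linear_combination (-b) * hxe
        rw [e]
        exact hac _ (B.neg_mem hb)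
      · have e : (x * b) ^ 3 - 1 * (x * b) ^ 2 = a * (-(b * (x * b))) := by
          linear_combination (-b * (x * b)) * hxe
        rw [e]
        exact hac _ (B.neg_mem (B.mul_mem hb (B.mul_mem hx hb)))
    have e : x = a + x * b * x := by linear_combination hxe
    rw [e]
    exact cond_add hac (cond_mul (hA b hb he) hx)

theorem Infra.not_TCl [Algebra.IsIntegral R S] (h : A ⋖ B) (hi : Infra A B) : ¬ TCl A B := by
  intro ht
  obtain ⟨Q, hQ, hc⟩ := exists_maximal_over_cond h
  refine h.lt.not_ge fun b hb => ?_
  obtain ⟨a, ha, hba⟩ := hi Q hQ b hb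
  have hx : b - a ∈ condSet A B := TCl.mem_cond h ht (B.sub_mem hb (h.le ha)) fun c _ hA =>
    mem_cond_of_mem h hQ.ne_top hc hA (Q.mul_mem_right c hba)
  simpa using A.add_mem (cond_sub hx) ha

/-- Adjoining to `A` a witness of the failure of t-closedness is infra-integral. -/
theorem infra_adjoin [Algebra.IsIntegral R S] {b r : S} (hr : r ∈ A)
    (h2 : b ^ 2 - r * b ∈ A) (h3 : b ^ 3 - r * b ^ 2 ∈ A) :
    Infra A (adj A b) := by
  intro Q hQ y hy
  have hb : ∃ a ∈ A, b - a ∈ Q := by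
    by_cases hβ : b ^ 2 - r * b ∈ Q
    · have e : b ^ 2 - r * b = b * (b - r) := by ring
      rw [e] at hβ
      rcases hQ.isPrime.mem_or_mem hβ with h | h
      · exact ⟨0, A.zero_mem, by simpa using h⟩
      · exact ⟨r, hr, h⟩
    · have : Algebra.IsIntegral A S := Algebra.IsIntegral.tower_top R
      have hM : (Q.comap (algebraMap A S)).IsMaximal :=
        Ideal.isMaximal_comap_of_isIntegral_of_isMaximal Q
      have hβ' : (⟨_, h2⟩ : A) ∉ Q.comap (algebraMap A S) := hβ
      obtain ⟨c, i, hi, hc⟩ := hM.exists_inv hβ'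
      have hc' : (c : S) * (b ^ 2 - r * b) + i = 1 := congrArg Subtype.val hc
      refine ⟨c * (b ^ 3 - r * b ^ 2), A.mul_mem c.2 h3, ?_⟩
      have e : b - c * (b ^ 3 - r * b ^ 2) = b * i := by linear_combination (-b) * hc'
      rw [e]
      exact Q.mul_mem_left _ hi
  refine adj_induction (p := fun y => ∃ a ∈ A, y - a ∈ Q) hb ?_ ?_ ?_ hy
  · intro a ha
    exact ⟨a, ha, by simp⟩
  · rintro x y ⟨a, ha, h⟩ ⟨a', ha', h'⟩
    refine ⟨a + a', A.add_mem ha ha', ?_⟩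
    rw [add_sub_add_comm]
    exact Q.add_mem h h'
  · rintro x y ⟨a, ha, h⟩ ⟨a', ha', h'⟩
    refine ⟨a * a', A.mul_mem ha ha', ?_⟩
    have e : x * y - a * a' = (x - a) * y + a * (y - a') := by ring
    rw [e]
    exact Q.add_mem (Q.mul_mem_right _ h) (Q.mul_mem_left _ h')

theorem exists_of_not_TCl [Algebra.IsIntegral R S] (hAB : A ≤ B) (h : ¬ TCl A B) :
    ∃ D, A < D ∧ D ≤ B ∧ Infra A D := by
  simp only [TCl, not_forall] at h
  obtain ⟨b, hb, r, hr, h2, h3, hbA⟩ := h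
  refine ⟨adj A b, ?_, adj_le hAB hb, infra_adjoin hr h2 h3⟩
  exact lt_of_le_of_ne (le_adj A b) fun e => hbA (e ▸ self_mem_adj A b)

theorem infra_of_not_TCl [Algebra.IsIntegral R S] (h : A ⋖ B) (ht : ¬ TCl A B) : Infra A B := by
  obtain ⟨D, h1, h2, h3⟩ := exists_of_not_TCl h.le ht
  rcases h.eq_or_eq h1.le h2 with e | e
  · exact absurd e h1.ne'
  · exact e ▸ h3

/-- If `A ⊂ B ⊂ C` are minimal steps and `A` is t-closed in `C`, so is `B`. A counterexample `b`
over `B` gives one over `A`: multiply it by an element of `(A : B) \ (B : C)` if there is one;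
otherwise `(A : B) = (B : C)`, and a suitable multiple of `b` is idempotent or of square zero
modulo this ideal. -/
theorem TCl.top_of_covBy [Algebra.IsIntegral R S] (hAB : A ⋖ B) (hBC : B ⋖ C) (ht : TCl A C) :
    TCl B C := by
  intro b hb r hr h2 h3
  by_contra hbB
  have htAB : TCl A B := fun b hb => ht b (hBC.le hb)
  -- `(B : C)` is the ideal of all `n ∈ B` with `n * b ∈ B`, by maximality
  have hN : ∀ n ∈ B, n * b ∈ B → n ∈ condSet B C := by
    intro n hn hnb
    by_contra hnc
    obtain ⟨n', hn', h1⟩ := exists_inv_mod_cond hBC hn hnc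
    refine hbB ?_
    have e : b = n' * (n * b) - (n * n' - 1) * b := by ring
    rw [e]
    exact B.sub_mem (B.mul_mem hn' hnb) (h1 b hb)
  by_cases hsub : condSet A B ⊆ condSet B C
  · have hsup : ∀ x ∈ condSet B C, x ∈ A := by
      intro x hx
      refine cond_sub (TCl.mem_cond hAB htAB (cond_sub hx) fun c hc hA => ?_)
      by_contra hn
      obtain ⟨a', ha', h1⟩ := exists_inv_mod_cond hAB hA hn
      refine one_notMem_cond hBC ?_
      have e : (1 : S) = x * c * a' + -(x * c * a' - 1) := by ring
      rw [e]
      exact cond_add (cond_mul (cond_mul hx (hBC.le hc)) (hBC.le (hAB.le ha')))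
        (cond_neg (hsub h1))
    have hβ : b ^ 2 - r * b ∈ condSet B C := by
      refine hN _ h2 ?_
      have e : (b ^ 2 - r * b) * b = b ^ 3 - r * b ^ 2 := by ring
      rwa [e]
    by_cases hrc : r ∈ condSet B C
    · have hb2 : b ^ 2 ∈ condSet B C := by
        have := cond_add hβ (cond_mul hrc hb)
        simpa using this
      refine hbB (hAB.le (ht b hb 0 A.zero_mem ?_ ?_))
      · simpa using hsup _ hb2
      · have := hsup _ (cond_mul hb2 hb)
        rw [zero_mul, sub_zero, pow_succ]
        exact this
    · obtain ⟨s, hs, h1⟩ := exists_inv_mod_cond hBC hr hrc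
      have hsC := hBC.le hs
      have hidem : (s * b) ^ 2 - 1 * (s * b) ∈ condSet B C := by
        have e : (s * b) ^ 2 - 1 * (s * b) = (b ^ 2 - r * b) * s ^ 2 + (r * s - 1) * (s * b) := by
          ring
        rw [e]
        exact cond_add (cond_mul hβ (C.pow_mem hsC 2)) (cond_mul h1 (C.mul_mem hsC hb))
      have hsb : s * b ∈ A := by
        refine ht _ (C.mul_mem hsC hb) 1 A.one_mem (hsup _ hidem) ?_
        have := hsup _ (cond_mul hidem (C.mul_mem hsC hb))
        have e : (s * b) ^ 3 - 1 * (s * b) ^ 2 = ((s * b) ^ 2 - 1 * (s * b)) * (s * b) := by ring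
        rwa [e]
      refine hbB ?_
      have e : b = r * (s * b) - (r * s - 1) * b := by ring
      rw [e]
      exact B.sub_mem (B.mul_mem hr (hAB.le hsb)) (h1 b hb)
  · obtain ⟨m, hm, hmN⟩ := Set.not_subset.1 hsub
    have hmB : m ∈ B := hAB.le (cond_sub hm)
    refine hmN (hN m hmB (hAB.le ?_))
    refine ht (m * b) (C.mul_mem (hBC.le hmB) hb) (m * r) (hm r hr) ?_ ?_
    · have e : (m * b) ^ 2 - m * r * (m * b) = m * (m * (b ^ 2 - r * b)) := by ring
      rw [e]
      exact hm _ (B.mul_mem hmB h2)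
    · have e : (m * b) ^ 3 - m * r * (m * b) ^ 2 = m * (m ^ 2 * (b ^ 3 - r * b ^ 2)) := by ring
      rw [e]
      exact hm _ (B.mul_mem (B.pow_mem hmB 2) h3)

/-! ### Infra-integral chains and module length -/

/-- For an infra-integral extension `R ⊆ B`, a minimal step `A ⊂ B` has simple quotient `B / A`
over `R`: it is one-dimensional over `A / (A : B)`, which is a quotient of `R`. -/
theorem Infra.covBy_toSubmodule [Algebra.IsIntegral R S] (h : A ⋖ B) (hi : Infra ⊥ B) :
    Subalgebra.toSubmodule A ⋖ Subalgebra.toSubmodule B := by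
  have hnt := (hi.mono bot_le le_rfl).not_TCl h
  simp only [TCl, not_forall] at hnt
  obtain ⟨b, hb, r, hr, h2, -, hbA⟩ := hnt
  obtain ⟨Q, hQ, hc⟩ := exists_maximal_over_cond h
  have hR : ∀ a ∈ A, ∃ r : R, a - algebraMap R S r ∈ condSet A B := by
    intro a ha
    obtain ⟨_, ⟨r, rfl⟩, h1⟩ := hi Q hQ a (h.le ha)
    exact ⟨r, mem_cond_of_mem h hQ.ne_top hc (A.sub_mem ha (A.algebraMap_mem r)) h1⟩
  have hB : ∀ y ∈ B, ∃ a ∈ A, ∃ a' ∈ A, y = a + a' * b := by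
    intro y hy
    rw [← eq_adjoin_of_covBy h hb hbA] at hy
    refine adj_induction (p := fun y => ∃ a ∈ A, ∃ a' ∈ A, y = a + a' * b)
      ⟨0, A.zero_mem, 1, A.one_mem, by simp⟩ ?_ ?_ ?_ hy
    · intro a ha
      exact ⟨a, ha, 0, A.zero_mem, by simp⟩
    · rintro _ _ ⟨a, ha, a', ha', rfl⟩ ⟨c, hc, c', hc', rfl⟩
      exact ⟨a + c, A.add_mem ha hc, a' + c', A.add_mem ha' hc', by ring⟩
    · rintro _ _ ⟨a, ha, a', ha', rfl⟩ ⟨c, hc, c', hc', rfl⟩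
      refine ⟨a * c + a' * c' * (b ^ 2 - r * b), ?_, a * c' + a' * c + a' * c' * r, ?_, by ring⟩
      · exact A.add_mem (A.mul_mem ha hc) (A.mul_mem (A.mul_mem ha' hc') h2)
      · exact A.add_mem (A.add_mem (A.mul_mem ha hc') (A.mul_mem ha' hc))
          (A.mul_mem (A.mul_mem ha' hc') hr)
  refine ⟨Subalgebra.toSubmodule.lt_iff_lt.2 h.lt, fun X hAX hXB => hXB.not_ge ?_⟩
  have hAX' : ∀ a ∈ A, a ∈ X := fun a ha => hAX.le ha
  have hsmul : ∀ a ∈ A, ∀ x ∈ X, a * x ∈ X := by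
    intro a ha x hx
    obtain ⟨t, ht⟩ := hR a ha
    have e : a * x = t • x + (a - algebraMap R S t) * x := by
      rw [Algebra.smul_def]
      ring
    rw [e]
    exact X.add_mem (X.smul_mem t hx) (hAX' _ (ht x (hXB.le hx)))
  obtain ⟨x, hx, hxA⟩ := Set.exists_of_ssubset (SetLike.coe_ssubset_coe.2 hAX)
  obtain ⟨a, ha, a', ha', rfl⟩ := hB x (hXB.le hx)
  have ha'b : a' * b ∈ X := by simpa using X.sub_mem hx (hAX' a ha)
  have ha'c : a' ∉ condSet A B := fun hc => hxA (A.add_mem ha (hc b hb))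
  obtain ⟨c, hcA, h1⟩ := exists_inv_mod_cond h ha' ha'c
  have hbX : b ∈ X := by
    have e : b = c * (a' * b) - (a' * c - 1) * b := by ring
    rw [e]
    exact X.sub_mem (hsmul c hcA _ ha'b) (hAX' _ (h1 b hb))
  intro y hy
  obtain ⟨d, hd, d', hd', rfl⟩ := hB y hy
  exact X.add_mem (hAX' d hd) (hsmul d' hd' b hbX)

theorem MC.toSubmodule [Algebra.IsIntegral R S] {n : ℕ} (h : MC n A B) (hi : Infra ⊥ B) :
    MC n (Subalgebra.toSubmodule A) (Subalgebra.toSubmodule B) := by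
  induction h with
  | nil a => exact MC.nil _
  | cons hab hbc ih =>
    exact MC.cons (Infra.covBy_toSubmodule hab (hi.mono le_rfl hbc.le)) (ih hi)

theorem Infra.length_unique [Algebra.IsIntegral R S] {n m : ℕ} (hi : Infra A B) (hA : A = ⊥)
    (hn : MC n A B) (hm : MC m A B) : n = m := by
  subst hA
  exact (hn.toSubmodule hi).length_unique_submodule (hm.toSubmodule hi)

/-! ### Rearranging chains through the t-closure -/

theorem exchange [Algebra.IsIntegral R S] [WellFoundedLT (Subalgebra R S)]
    [WellFoundedGT (Subalgebra R S)] (h2 : IsTwoCatenarian R S)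
    (hAB : A ⋖ B) (hBC : B ⋖ C) (ht : TCl A B) (hi : Infra B C) :
    ∃ D, A ⋖ D ∧ D ⋖ C ∧ Infra A D ∧ TCl D C := by
  have hnAC : ¬ Infra A C := fun h => (h.mono le_rfl hBC.le).not_TCl hAB ht
  have hnt : ¬ TCl A C := fun h => hi.not_TCl hBC (h.top_of_covBy hAB hBC)
  obtain ⟨D, hAD, hDC, hiD⟩ := exists_of_not_TCl (hAB.le.trans hBC.le) hnt
  have hDC' : D < C := lt_of_le_of_ne hDC fun e => hnAC (e ▸ hiD)
  obtain ⟨p, hp⟩ := exists_MC hAD.le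
  obtain ⟨q, hq⟩ := exists_MC hDC'.le
  obtain ⟨c, hc⟩ := (hp.append hq).exists_isMaxChain
  have hpq := h2 A B C hAB hBC _ c hc
  have key : ∀ {k : ℕ} {X Y : Subalgebra R S}, MC k X Y → X < Y → 1 ≤ k ∧ (k = 1 → X ⋖ Y) := by
    intro k X Y h hlt
    cases h with
    | nil => exact absurd hlt (lt_irrefl _)
    | cons h h' =>
      refine ⟨by omega, fun e => ?_⟩
      cases h' with
      | nil => exact h
      | cons _ _ => omega
  obtain ⟨hp1, hp2⟩ := key hp hAD
  obtain ⟨hq1, hq2⟩ := key hq hDC'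
  have hDcov := hq2 (by omega)
  refine ⟨D, hp2 (by omega), hDcov, hiD, ?_⟩
  by_contra hn
  exact hnAC (hiD.trans (infra_of_not_TCl hDcov hn))

/-- A t-closed step can be moved past an infra-integral chain without changing its length. -/
theorem exchange_chain [Algebra.IsIntegral R S] [WellFoundedLT (Subalgebra R S)]
    [WellFoundedGT (Subalgebra R S)] (h2 : IsTwoCatenarian R S) {p : ℕ} {U : Subalgebra R S}
    (hBU : MC p B U) : ∀ A : Subalgebra R S, A ⋖ B → TCl A B → Infra B U →
    ∃ V, MC p A V ∧ Infra A V ∧ V ⋖ U ∧ TCl V U := by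
  induction hBU with
  | nil B => exact fun A hAB ht _ => ⟨A, MC.nil A, Infra.refl A, hAB, ht⟩
  | @cons n B C U hBC hCU ih =>
    intro A hAB ht hi
    obtain ⟨D, hAD, hDC, hiD, htD⟩ := exchange h2 hAB hBC ht (hi.mono le_rfl hCU.le)
    obtain ⟨V, hDV, hiV, hVU, htV⟩ := ih D hDC htD (hi.mono hBC.le le_rfl)
    exact ⟨V, MC.cons hAD hDV, hiD.trans hiV, hVU, htV⟩

theorem exists_split [Algebra.IsIntegral R S] [WellFoundedLT (Subalgebra R S)]
    [WellFoundedGT (Subalgebra R S)] (h2 : IsTwoCatenarian R S) {n : ℕ} (h : MC n A C) :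
    ∃ U p q, p + q = n ∧ MC p A U ∧ Infra A U ∧ MC q U C ∧ TCl U C := by
  induction h with
  | nil A => exact ⟨A, 0, 0, rfl, MC.nil A, Infra.refl A, MC.nil A, fun b hb _ _ _ _ => hb⟩
  | @cons n A B C hAB _ ih =>
    obtain ⟨U, p, q, rfl, hBU, hi, hUC, ht⟩ := ih
    by_cases htAB : TCl A B
    · obtain ⟨V, hAV, hiV, hVU, htV⟩ := exchange_chain h2 hBU A hAB htAB hi
      exact ⟨V, p, q + 1, by omega, hAV, hiV, MC.cons hVU hUC, htV.trans hVU.le ht⟩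
    · exact ⟨U, p + 1, q, by omega, MC.cons hAB hBU, (infra_of_not_TCl hAB htAB).trans hi,
        hUC, ht⟩

/-- An infra-integral subextension is contained in every t-closed subalgebra. -/
theorem Infra.le_of_TCl [Algebra.IsIntegral R S] [WellFoundedLT (Subalgebra R S)]
    {T U : Subalgebra R S} (hi : Infra ⊥ U) (ht : TCl T ⊤) : U ≤ T := by
  by_contra hn
  have hlt : T ⊓ U < U := lt_of_le_of_ne inf_le_right fun e => hn (inf_eq_right.1 e)
  obtain ⟨W, hW, hWU⟩ := exists_covBy_le_of_lt hlt
  refine (hi.mono bot_le hWU).not_TCl hW fun b hb r hr h2 h3 => ⟨?_, hWU hb⟩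
  exact ht b trivial r hr.1 h2.1 h3.1

/-- At a maximal ideal of `S`, surjectivity on residue fields makes every element of `T`
congruent to one of `R`. -/
theorem IsInfraIntegral.infra [Algebra.IsIntegral R S] {T : Subalgebra R S}
    (hT : IsInfraIntegral R T) : Infra ⊥ T := by
  intro Q hQ t ht
  have : Algebra.IsIntegral T S := Algebra.IsIntegral.tower_top R
  have hPmax : (Q.comap (algebraMap T S)).IsMaximal :=
    Ideal.isMaximal_comap_of_isIntegral_of_isMaximal Q
  set P : Ideal T := Q.comap (algebraMap T S) with hP
  have hPp : P.IsPrime := hPmax.isPrime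
  have := hT.1
  have hpmax : (P.comap (algebraMap R T)).IsMaximal :=
    Ideal.isMaximal_comap_of_isIntegral_of_isMaximal P
  have hsurj := (hT.2 P hPp).2
  obtain ⟨y, hy⟩ := hsurj (IsLocalRing.residue _ (algebraMap T _ ⟨t, ht⟩))
  obtain ⟨z, rfl⟩ := IsLocalRing.residue_surjective y
  obtain ⟨⟨r, s⟩, hz⟩ := IsLocalization.surj (P.comap (algebraMap R T)).primeCompl z
  obtain ⟨c, i, hi, hc⟩ := hpmax.exists_inv s.2
  refine ⟨algebraMap R S (c * r), ⟨_, rfl⟩, ?_⟩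
  -- clear denominators: `s * t ≡ r` modulo `P`
  have hst : algebraMap R T s * ⟨t, ht⟩ - algebraMap R T r ∈ P := by
    rw [IsLocalRing.ResidueField.map_residue] at hy
    have hz' := congrArg (Localization.localRingHom (P.comap (algebraMap R T)) P
      (algebraMap R T) rfl) hz
    rw [map_mul, Localization.localRingHom_to_map, Localization.localRingHom_to_map] at hz'
    have hz'' := congrArg (IsLocalRing.residue (Localization.AtPrime P)) hz'
    rw [map_mul, hy, ← map_mul, ← map_mul, ← sub_eq_zero, ← map_sub, ← map_sub,
      IsLocalRing.residue_eq_zero_iff] at hz''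
    rw [mul_comm]
    exact (IsLocalization.AtPrime.to_map_mem_maximal_iff (Localization.AtPrime P) P _).1 hz''
  have hst' : algebraMap R S s * t - algebraMap R S r ∈ Q := hst
  have hi' : algebraMap R S i ∈ Q := hi
  have hc' : algebraMap R S c * algebraMap R S s + algebraMap R S i = 1 := by
    rw [← map_mul, ← map_add, hc, map_one]
  have e : t - algebraMap R S (c * r) = algebraMap R S c * (algebraMap R S s * t - algebraMap R S r)
      + t * algebraMap R S i := by
    rw [map_mul]
    linear_combination (-t) * hc'
  rw [e]
  exact Q.add_mem (Q.mul_mem_left _ hst') (Q.mul_mem_left _ hi')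

end Ext

/-- Let `R ⊆ S` be an integral FCP extension with t-closure `T`.
Then `R ⊆ S` is catenarian iff `T ⊆ S` is catenarian and `R ⊆ S` is 2-catenarian. -/
theorem stmt_18 {R S : Type*} [CommRing R] [CommRing S] [Algebra R S]
    (hinj : Function.Injective (algebraMap R S)) (hFCP : IsFCPExt R S)
    (hint : Algebra.IsIntegral R S)
    (T : Subalgebra R S) (hT : IsTClosure T) :
    IsCatenarianExt R S ↔
      IsCatenarianFromTo T (⊤ : Subalgebra R S) ∧ IsTwoCatenarian R S := by
  have := hFCP.wellFoundedLT
  have := hFCP.wellFoundedGT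
  have hi : Infra ⊥ T := hT.1.infra
  have ht : TCl T ⊤ := fun b _ => hT.2 b
  rw [IsCatenarianExt, isCatenarianFromTo_iff, isCatenarianFromTo_iff]
  constructor
  · intro h
    refine ⟨fun n m hn hm => ?_, fun A B C hAB hBC n c hc => ?_⟩
    · obtain ⟨p, hp⟩ := exists_MC (bot_le : ⊥ ≤ T)
      have := h _ _ (hp.append hn) (hp.append hm)
      omega
    · obtain ⟨p, hp⟩ := exists_MC (bot_le : ⊥ ≤ A)
      obtain ⟨q, hq⟩ := exists_MC (le_top : C ≤ ⊤)
      have := h _ _ ((hp.append (MC.of_isMaxChain hc)).append hq)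
        ((hp.append (MC.cons hAB (MC.cons hBC (MC.nil C)))).append hq)
      omega
  · rintro ⟨hcat, h2⟩ n m hn hm
    obtain ⟨U, p, q, rfl, hp, hiU, hq, htU⟩ := exists_split h2 hn
    obtain ⟨V, p', q', rfl, hp', hiV, hq', htV⟩ := exists_split h2 hm
    obtain rfl : U = T := le_antisymm (hiU.le_of_TCl ht) (hi.le_of_TCl htU)
    obtain rfl : V = U := le_antisymm (hiV.le_of_TCl ht) (hi.le_of_TCl htV)
    rw [hi.length_unique rfl hp hp', hcat _ _ hq hq']
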